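/- Let n ≥ 1 be a natural number. Then the functions x ↦ x^{−3(n−1)}·w(f_n)(x) and x ↦ w(f_n)(x) are monotone increasing and positive on the interval (0, j₁(f_n')), where j₁(f_n') is the first positive zero of f_n'. Moreover, w(f_n)(x) > 0 for all x in (0, j₁(f_n)), where j₁(f_n) = j_{n+1/2,1} is the first positive zero of f_n. -/

import Mathlib

/-- Determinant of the 3x3 Hankel-Wronskian matrix of h (rows of 2nd..4th derivatives). -/
noncomputable def w (f : ℝ → ℝ) (x : ℝ) : ℝ :=
  Matrix.det !![deriv^[2] f x, deriv f x, f x;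
    deriv^[3] f x, deriv^[2] f x, deriv f x;
    deriv^[4] f x, deriv^[3] f x, deriv^[2] f x]

/-- Bessel function of the first kind (for `x > 0`). -/
noncomputable def besselJ (ν : ℝ) (x : ℝ) : ℝ :=
  ∑' k : ℕ, (-1 : ℝ) ^ k / ((Nat.factorial k : ℝ) * Real.Gamma ((k : ℝ) + ν + 1)) *
    (x / 2) ^ (2 * (k : ℝ) + ν)

/-- `fn n x = √(π/2)·x^(n+1/2)·J_(n+1/2)(x)`, via the equivalent recursive definition
`fn 0 = sin`, `fn (n+1) x = ∫_0^x t·fn n t dt`. -/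
noncomputable def fn : ℕ → ℝ → ℝ
  | 0 => fun x => Real.sin x
  | n + 1 => fun x => ∫ t in (0:ℝ)..x, t * fn n t

/-- First positive zero of a function on `(0,∞)`. -/
noncomputable def j1 (g : ℝ → ℝ) : ℝ := sInf {x : ℝ | 0 < x ∧ g x = 0}


open Set Filter Topology

lemma fn_cont (n : ℕ) : Continuous (fn n) := by
  induction n with
  | zero => exact Real.continuous_sin
  | succ n ih =>
    have h : Continuous fun t => t * fn n t := continuous_id.mul ih
    exact intervalIntegral.continuous_primitive (fun a b => h.intervalIntegrable a b) 0

lemma fn_deriv (n : ℕ) (x : ℝ) : HasDerivAt (fn (n + 1)) (x * fn n x) x := by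
  have h : Continuous fun t => t * fn n t := continuous_id.mul (fn_cont n)
  exact intervalIntegral.integral_hasDerivAt_right (h.intervalIntegrable 0 x)
    h.stronglyMeasurable.stronglyMeasurableAtFilter h.continuousAt

lemma fn_zero (n : ℕ) : fn n 0 = 0 := by
  cases n with
  | zero => exact Real.sin_zero
  | succ n => simp [fn]

lemma zero_of_deriv (F : ℝ → ℝ) (h : ∀ x, HasDerivAt F 0 x) (h0 : F 0 = 0) (x : ℝ) : F x = 0 := by
  rw [← h0]
  exact is_const_of_deriv_eq_zero (fun x => (h x).differentiableAt) (fun x => (h x).deriv) x 0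

lemma fn_ode_aux (m : ℕ) : ∀ x, ∃ d, HasDerivAt (fn m) d x ∧
    x * d = (2 * m + 1) * fn m x - fn (m + 1) x := by
  induction m with
  | zero =>
    intro x
    refine ⟨Real.cos x, Real.hasDerivAt_sin x, ?_⟩
    have := zero_of_deriv (fun x => x * Real.cos x - (Real.sin x - fn 1 x)) (fun x => by
      have h := ((hasDerivAt_id x).mul (Real.hasDerivAt_cos x)).sub
        ((Real.hasDerivAt_sin x).sub (fn_deriv 0 x))
      refine h.congr_deriv ?_
      simp [fn]) (by simp [fn_zero]) x
    simp only [fn] at *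
    push_cast
    linarith
  | succ m ih =>
    intro x
    refine ⟨_, fn_deriv m x, ?_⟩
    have := zero_of_deriv (fun x => x ^ 2 * fn m x - ((2 * m + 3) * fn (m + 1) x - fn (m + 2) x))
      (fun x => by
      obtain ⟨d, hd, hx⟩ := ih x
      have h := ((hasDerivAt_pow 2 x).mul hd).sub
        (((fn_deriv m x).const_mul (2 * (m : ℝ) + 3)).sub (fn_deriv (m + 1) x))
      refine h.congr_deriv ?_
      push_cast
      linear_combination x * hx) (by simp [fn_zero]) x
    push_cast
    linear_combination this

lemma fn_ode (m : ℕ) (x : ℝ) (hx : x ≠ 0) :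
    HasDerivAt (fn m) (((2 * m + 1) * fn m x - fn (m + 1) x) / x) x := by
  obtain ⟨d, hd, h⟩ := fn_ode_aux m x
  rw [← h, mul_div_cancel_left₀ _ hx]
  exact hd

lemma fn_pos_pi (m : ℕ) : ∀ x ∈ Ioo 0 Real.pi, 0 < fn m x := by
  induction m with
  | zero => exact fun x hx => Real.sin_pos_of_pos_of_lt_pi hx.1 hx.2
  | succ m ih =>
    intro x hx
    have h : Continuous fun t => t * fn m t := continuous_id.mul (fn_cont m)
    exact intervalIntegral.intervalIntegral_pos_of_pos_on (h.intervalIntegrable _ _)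
      (fun t ht => mul_pos ht.1 (ih t ⟨ht.1, ht.2.trans hx.2⟩)) hx.1

lemma fn_bound (m : ℕ) : ∀ x, 0 ≤ x → |fn m x| ≤ x ^ (2 * m + 1) := by
  induction m with
  | zero =>
    intro x hx
    have := Real.abs_sin_le_abs (x := x)
    rw [abs_of_nonneg hx] at this
    simpa [fn] using this
  | succ m ih =>
    intro x hx
    have h : ‖∫ t in (0:ℝ)..x, t * fn m t‖ ≤ (x * x ^ (2 * m + 1)) * |x - 0| := by
      apply intervalIntegral.norm_integral_le_of_norm_le_const
      intro t ht
      rw [uIoc_of_le hx] at ht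
      rw [norm_mul, Real.norm_eq_abs, Real.norm_eq_abs, abs_of_pos ht.1]
      have := ih t ht.1.le
      have h2 : t ^ (2 * m + 1) ≤ x ^ (2 * m + 1) := pow_le_pow_left₀ ht.1.le ht.2 _
      exact mul_le_mul ht.2 (this.trans h2) (abs_nonneg _) hx
    rw [sub_zero, abs_of_nonneg hx] at h
    calc |fn (m + 1) x| ≤ _ := h
      _ = _ := by ring

lemma not_zero_of_lt_j1 (g : ℝ → ℝ) (x : ℝ) (hx : 0 < x) (hj : x < j1 g) : g x ≠ 0 := by
  intro h
  have : j1 g ≤ x := csInf_le ⟨0, fun y hy => hy.1.le⟩ ⟨hx, h⟩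
  linarith

lemma fn_pos_of (m : ℕ) (b : ℝ) (h : ∀ x ∈ Ioo 0 b, fn m x ≠ 0) : ∀ x ∈ Ioo 0 b, 0 < fn m x := by
  intro x hx
  by_contra hc
  push Not at hc
  have hp := Real.pi_pos
  set y := min x (Real.pi / 2) with hy
  have hy0 : 0 < y := lt_min hx.1 (by linarith)
  have hyx : y ≤ x := min_le_left _ _
  have hyp : 0 < fn m y := fn_pos_pi m y ⟨hy0, (min_le_right _ _).trans_lt (by linarith)⟩
  obtain ⟨z, hz, hz0⟩ := intermediate_value_Icc' hyx (fn_cont m).continuousOn ⟨hc, hyp.le⟩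
  exact h z ⟨hy0.trans_le hz.1, hz.2.trans_lt hx.2⟩ hz0

lemma pos_of (H H' : ℝ → ℝ) (k : ℕ) (b C : ℝ) (hd : ∀ y ∈ Ioc 0 b, HasDerivAt H (H' y) y)
    (hp : ∀ y ∈ Ioc 0 b, k * H y < y * H' y)
    (hb : ∀ y ∈ Ioc (0:ℝ) 1, |H y| ≤ C * y ^ (k + 1)) :
    StrictMonoOn (fun y => H y / y ^ k) (Ioc 0 b) ∧ ∀ y ∈ Ioc 0 b, 0 < H y := by
  have hK : ∀ y ∈ Ioc 0 b, HasDerivAt (fun y => H y / y ^ k)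
      ((y * H' y - k * H y) / y ^ (k + 1)) y := by
    intro y hy
    have hy0 : y ≠ 0 := hy.1.ne'
    refine ((hd y hy).div (hasDerivAt_pow k y) (pow_ne_zero _ hy0)).congr_deriv ?_
    rcases k with _ | k
    · simp; field_simp
    · simp only [Nat.add_sub_cancel]
      field_simp
      ring
  have hmono : StrictMonoOn (fun y => H y / y ^ k) (Ioc 0 b) := by
    apply strictMonoOn_of_deriv_pos (convex_Ioc 0 b)
    · exact fun y hy => (hK y hy).continuousAt.continuousWithinAt
    · intro y hy
      have hy' := interior_subset hy
      rw [(hK y hy').deriv]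
      have := hp y hy'
      have h0 := pow_pos hy'.1 (k + 1)
      apply div_pos (by linarith) h0
  refine ⟨hmono, fun y hy => ?_⟩
  have hy2 : y / 2 ∈ Ioc 0 b := ⟨by linarith [hy.1], by linarith [hy.1, hy.2]⟩
  have hlt : H (y/2) / (y/2) ^ k < H y / y ^ k := hmono hy2 hy (by linarith [hy.1])
  have hlim : Tendsto (fun z => H z / z ^ k) (𝓝[>] 0) (𝓝 0) := by
    have h1 : Tendsto (fun z : ℝ => C * z) (𝓝[>] 0) (𝓝 0) := by
      have : Tendsto (fun z : ℝ => C * z) (𝓝 0) (𝓝 (C * 0)) := (continuous_const.mul continuous_id).tendsto 0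
      rw [mul_zero] at this
      exact this.mono_left nhdsWithin_le_nhds
    apply squeeze_zero_norm' _ h1
    have : Ioc (0:ℝ) 1 ∈ 𝓝[>] (0:ℝ) := Ioc_mem_nhdsGT one_pos
    filter_upwards [this] with z hz
    have h0 := pow_pos hz.1 k
    rw [norm_div, Real.norm_eq_abs, Real.norm_eq_abs, abs_of_pos h0, div_le_iff₀ h0]
    have := hb z hz
    rw [pow_succ] at this
    linarith
  have hge : 0 ≤ H (y/2) / (y/2) ^ k := by
    apply le_of_tendsto hlim
    have : Ioc (0:ℝ) (y/2) ∈ 𝓝[>] (0:ℝ) := Ioc_mem_nhdsGT hy2.1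
    filter_upwards [this] with z hz
    exact hmono.monotoneOn ⟨hz.1, hz.2.trans hy2.2⟩ hy2 hz.2
  have h3 : 0 < H y / y ^ k := hge.trans_lt hlt
  have h0 := pow_pos hy.1 k
  exact (div_pos_iff_of_pos_right h0).1 h3

/-- compactness bound -/
lemma cpt_bound (Φ : ℝ × ℝ × ℝ → ℝ) (h : Continuous Φ) : ∃ C, 0 ≤ C ∧ ∀ y v t, y ∈ Icc (-1:ℝ) 1 →
    v ∈ Icc (-1:ℝ) 1 → t ∈ Icc (-1:ℝ) 1 → |Φ (y, v, t)| ≤ C := by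
  have hc : IsCompact (Icc (-1:ℝ) 1 ×ˢ (Icc (-1:ℝ) 1 ×ˢ Icc (-1:ℝ) 1)) :=
    isCompact_Icc.prod (isCompact_Icc.prod isCompact_Icc)
  obtain ⟨C, hC⟩ := hc.exists_bound_of_continuousOn h.continuousOn
  refine ⟨max C 0, le_max_right _ _, fun y v t hy hv ht => ?_⟩
  exact (hC (y, v, t) ⟨hy, hv, ht⟩).trans (le_max_left _ _)

lemma fn_scale (m : ℕ) (y : ℝ) (hy : y ∈ Ioc (0:ℝ) 1) : ∃ v ∈ Icc (-1:ℝ) 1, ∃ t ∈ Icc (-1:ℝ) 1,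
    fn (m + 1) y = y ^ (2 * m + 1) * v ∧ fn m y = y ^ (2 * m + 1) * t := by
  have h0 := pow_pos hy.1 (2 * m + 1)
  have h1 := fn_bound m y hy.1.le
  have h2 := (fn_bound (m + 1) y hy.1.le).trans
    (pow_le_pow_of_le_one hy.1.le hy.2 (show 2 * m + 1 ≤ 2 * (m + 1) + 1 by omega))
  refine ⟨fn (m + 1) y / y ^ (2 * m + 1), ?_, fn m y / y ^ (2 * m + 1), ?_, ?_, ?_⟩
  · rw [mem_Icc, ← abs_le, abs_div, abs_of_pos h0, div_le_one h0]; exact h2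
  · rw [mem_Icc, ← abs_le, abs_div, abs_of_pos h0, div_le_one h0]; exact h1
  · field_simp
  · field_simp

lemma hom_bound (m k d : ℕ) (hk : k ≤ (2 * m + 1) * d) (H : ℝ → ℝ) (Φ : ℝ × ℝ × ℝ → ℝ)
    (h : Continuous Φ) (hH : ∀ y, H y = Φ (y, fn (m + 1) y, fn m y))
    (hom : ∀ s y v t, Φ (y, s * v, s * t) = s ^ d * Φ (y, v, t)) :
    ∃ C, ∀ y ∈ Ioc (0:ℝ) 1, |H y| ≤ C * y ^ k := by
  obtain ⟨C, hC0, hC⟩ := cpt_bound Φ h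
  refine ⟨C, fun y hy => ?_⟩
  obtain ⟨v, hv, t, ht, e1, e2⟩ := fn_scale m y hy
  rw [hH, e1, e2, hom, abs_mul, ← pow_mul, abs_of_pos (pow_pos hy.1 _), mul_comm]
  have h1 := hC y v t ⟨by linarith [hy.1], hy.2⟩ hv ht
  have h2 := pow_le_pow_of_le_one hy.1.le hy.2 hk
  exact mul_le_mul h1 h2 (pow_pos hy.1 _).le hC0

noncomputable def PP (m : ℕ) (y : ℝ) : ℝ :=
  fn (m + 1) y ^ 3 - (3 * m + 2) * fn (m + 1) y ^ 2 * fn m y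
    + (y ^ 2 + (m + 1) * (2 * m + 1)) * fn (m + 1) y * fn m y ^ 2 - m * y ^ 2 * fn m y ^ 3

noncomputable def FF (m : ℕ) (y : ℝ) : ℝ :=
  (y ^ 2 - (m + 1) * m) * fn (m + 1) y ^ 2
    + (m + 1) * (m * (2 * m + 1) - 2 * y ^ 2) * fn (m + 1) y * fn m y
    + y ^ 2 * (y ^ 2 - (m + 1) * (m - 1)) * fn m y ^ 2

noncomputable def GG (m : ℕ) (y : ℝ) : ℝ :=
  fn (m + 1) y ^ 2 - 2 * (m + 1) * fn (m + 1) y * fn m y + (y ^ 2 + m + 1) * fn m y ^ 2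

lemma GG_deriv (m : ℕ) (y : ℝ) (hy : y ≠ 0) : HasDerivAt (GG m)
    (((2 * m + 2) * GG m y + 2 * (m + 1) * m * fn m y ^ 2) / y) y := by
  have hf := fn_deriv m y
  have hg := fn_ode m y hy
  have hX := hasDerivAt_pow 2 y
  have := (((hf.pow 2).sub ((hf.const_mul (2 * ((m : ℝ) + 1))).mul hg)).add
    (((hX.add_const (m : ℝ)).add_const (1 : ℝ)).mul (hg.pow 2)))
  refine this.congr_deriv ?_
  simp only [GG]
  push_cast
  simp
  field_simp
  ring

lemma FF_deriv (m : ℕ) (y : ℝ) (hy : y ≠ 0) : HasDerivAt (FF m)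
    (((2 * m + 1) * FF m y + 3 * y ^ 2 * GG m y) / y) y := by
  have hf := fn_deriv m y
  have hg := fn_ode m y hy
  have hX := hasDerivAt_pow 2 y
  have := (((hX.sub_const (((m : ℝ) + 1) * m)).mul (hf.pow 2)).add
    (((((hX.const_mul 2).const_sub ((m:ℝ) * (2 * m + 1))).const_mul ((m : ℝ) + 1)).mul hf).mul hg)).add
    ((hX.mul (hX.sub_const (((m : ℝ) + 1) * (m - 1)))).mul (hg.pow 2))
  refine this.congr_deriv ?_
  simp only [GG, FF]
  push_cast
  simp
  field_simp
  ring

lemma PP_deriv (m : ℕ) (y : ℝ) (hy : y ≠ 0) : HasDerivAt (PP m)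
    (((3 * m + 2) * PP m y + fn m y * FF m y) / y) y := by
  have hf := fn_deriv m y
  have hg := fn_ode m y hy
  have hX := hasDerivAt_pow 2 y
  have := (((hf.pow 3).sub (((hf.pow 2).const_mul (3 * (m : ℝ) + 2)).mul hg)).add
    (((hX.add_const (((m : ℝ) + 1) * (2 * m + 1))).mul hf).mul (hg.pow 2))).sub
    ((hX.const_mul (m:ℝ)).mul (hg.pow 3))
  refine this.congr_deriv ?_
  simp only [PP, FF]
  push_cast
  simp
  field_simp
  ring

lemma GG_pos (m : ℕ) (b : ℝ) (hg : ∀ y ∈ Ioc 0 b, 0 < fn m y) : ∀ y ∈ Ioc 0 b, 0 < GG m y := by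
  rcases Nat.eq_zero_or_pos m with rfl | hm
  · intro y hy
    have h1 := mul_pos (pow_pos hy.1 2) (pow_pos (hg y hy) 2)
    have h2 := sq_nonneg (fn (0 + 1) y - fn 0 y)
    simp only [GG]
    push_cast
    linarith
  · obtain ⟨C, hC⟩ := hom_bound m (2 * m + 2 + 1) 2 (by omega) (GG m)
      (fun p => p.2.1 ^ 2 - 2 * (m + 1) * p.2.1 * p.2.2 + (p.1 ^ 2 + m + 1) * p.2.2 ^ 2)
      (by fun_prop) (fun y => rfl) (by intros; ring)
    refine (pos_of (GG m) _ (2 * m + 2) b C (fun y hy => GG_deriv m y hy.1.ne') ?_ hC).2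
    intro y hy
    have hm' : (0:ℝ) < m := by exact_mod_cast hm
    have h := pow_pos (hg y hy) 2
    rw [mul_div_cancel₀ _ hy.1.ne']
    push_cast
    have : 0 < 2 * ((m:ℝ) + 1) * m * fn m y ^ 2 := by positivity
    linarith

lemma FF_pos (m : ℕ) (b : ℝ) (hg : ∀ y ∈ Ioc 0 b, 0 < fn m y) : ∀ y ∈ Ioc 0 b, 0 < FF m y := by
  obtain ⟨C, hC⟩ := hom_bound m (2 * m + 1 + 1) 2 (by omega) (FF m)
    (fun p => (p.1 ^ 2 - (m + 1) * m) * p.2.1 ^ 2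
    + (m + 1) * (m * (2 * m + 1) - 2 * p.1 ^ 2) * p.2.1 * p.2.2
    + p.1 ^ 2 * (p.1 ^ 2 - (m + 1) * (m - 1)) * p.2.2 ^ 2)
    (by fun_prop) (fun y => rfl) (by intros; ring)
  refine (pos_of (FF m) _ (2 * m + 1) b C (fun y hy => FF_deriv m y hy.1.ne') ?_ hC).2
  intro y hy
  rw [mul_div_cancel₀ _ hy.1.ne']
  push_cast
  have := mul_pos (pow_pos hy.1 2) (GG_pos m b hg y hy)
  linarith

lemma PP_main (m : ℕ) (b : ℝ) (hg : ∀ y ∈ Ioc 0 b, 0 < fn m y) :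
    StrictMonoOn (fun y => PP m y / y ^ (3 * m + 2)) (Ioc 0 b) ∧ ∀ y ∈ Ioc 0 b, 0 < PP m y := by
  obtain ⟨C, hC⟩ := hom_bound m (3 * m + 2 + 1) 3 (by omega) (PP m)
    (fun p => p.2.1 ^ 3 - (3 * m + 2) * p.2.1 ^ 2 * p.2.2
    + (p.1 ^ 2 + (m + 1) * (2 * m + 1)) * p.2.1 * p.2.2 ^ 2 - m * p.1 ^ 2 * p.2.2 ^ 3)
    (by fun_prop) (fun y => rfl) (by intros; ring)
  refine (pos_of (PP m) _ (3 * m + 2) b C (fun y hy => PP_deriv m y hy.1.ne') ?_ hC)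
  intro y hy
  rw [mul_div_cancel₀ _ hy.1.ne']
  push_cast
  have := mul_pos (hg y hy) (FF_pos m b hg y hy)
  linarith

lemma PP_pos_full (m : ℕ) (x : ℝ) (hx : 0 < x) (hf : ∀ y ∈ Ioc 0 x, 0 < fn (m + 1) y) :
    0 < PP m x := by
  have hfx := hf x ⟨hx, le_rfl⟩
  rcases le_or_gt (fn m x) 0 with hg | hg
  · have h1 : 0 < fn (m + 1) x ^ 3 := by positivity
    obtain ⟨s, hs⟩ : ∃ s, s = - fn m x := ⟨_, rfl⟩
    have hs0 : 0 ≤ s := by linarith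
    have : fn m x = - s := by linarith
    have e : PP m x = fn (m + 1) x ^ 3 + ((3 * m + 2) * fn (m + 1) x ^ 2 * s
      + (x ^ 2 + (m + 1) * (2 * m + 1)) * fn (m + 1) x * s ^ 2 + m * x ^ 2 * s ^ 3) := by
      simp only [PP, this]; ring
    rw [e]
    positivity
  · refine (PP_main m x ?_).2 x ⟨hx, le_rfl⟩
    have hK : ∀ y ∈ Ioc 0 x, HasDerivAt (fun y => fn m y / y ^ (2 * m + 1))
        (- fn (m + 1) y / y ^ (2 * m + 2)) y := by
      intro y hy
      have hy0 : y ≠ 0 := hy.1.ne'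
      refine ((fn_ode m y hy0).div (hasDerivAt_pow (2 * m + 1) y) (pow_ne_zero _ hy0)).congr_deriv ?_
      simp only [Nat.add_sub_cancel]
      push_cast
      field_simp
      ring
    have hanti : AntitoneOn (fun y => fn m y / y ^ (2 * m + 1)) (Ioc 0 x) := by
      apply antitoneOn_of_deriv_nonpos (convex_Ioc 0 x)
      · exact fun y hy => (hK y hy).continuousAt.continuousWithinAt
      · exact fun y hy => (hK y (interior_subset hy)).differentiableAt.differentiableWithinAt
      · intro y hy
        have hy' := interior_subset hy
        rw [(hK y hy').deriv, neg_div]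
        have := div_pos (hf y hy') (pow_pos hy'.1 (2 * m + 2))
        linarith
    intro y hy
    have := hanti hy ⟨hx, le_rfl⟩ hy.2
    have h2 := div_pos hg (pow_pos hx (2 * m + 1))
    exact (div_pos_iff_of_pos_right (pow_pos hy.1 _)).1 (h2.trans_le this)

lemma w_eq (m : ℕ) (x : ℝ) (hx : 0 < x) :
    w (fn (m + 1)) x = 4 * (m + 1) / x ^ 2 * PP m x := by
  have step : ∀ (A B C : ℝ → ℝ), (∀ y, 0 < y → A y = B y) →
      (∀ y, 0 < y → HasDerivAt B (C y) y) → ∀ y, 0 < y → deriv A y = C y := by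
    intro A B C h1 h2 y hy
    have : A =ᶠ[𝓝 y] B := by
      filter_upwards [Ioi_mem_nhds hy] with z hz using h1 z hz
    rw [this.deriv_eq]
    exact (h2 y hy).deriv
  have d1 : ∀ y, 0 < y → deriv (fn (m + 1)) y = y * fn m y := fun y _ => (fn_deriv m y).deriv
  have d2 : ∀ y, 0 < y → deriv^[2] (fn (m + 1)) y = (2 * m + 2) * fn m y - fn (m + 1) y := by
    refine step _ _ _ d1 (fun y hy => ?_)
    have hy0 := hy.ne'
    refine ((hasDerivAt_id y).mul (fn_ode m y hy.ne')).congr_deriv ?_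
    simp
    field_simp
    ring
  have d3 : ∀ y, 0 < y → deriv^[3] (fn (m + 1)) y =
      (2 * m + 2) * (((2 * m + 1) * fn m y - fn (m + 1) y) / y) - y * fn m y := by
    refine step _ _ _ d2 (fun y hy => ?_)
    exact ((fn_ode m y hy.ne').const_mul (2 * (m:ℝ) + 2)).sub (fn_deriv m y)
  have d4 : ∀ y, 0 < y → deriv^[4] (fn (m + 1)) y =
      (2 * m + 2) * ((((2 * m + 1) * (((2 * m + 1) * fn m y - fn (m + 1) y) / y) - y * fn m y) * y -
        ((2 * m + 1) * fn m y - fn (m + 1) y)) / y ^ 2)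
        - ((2 * m + 2) * fn m y - fn (m + 1) y) := by
    refine step _ _ _ d3 (fun y hy => ?_)
    have hy0 := hy.ne'
    have hg := fn_ode m y hy.ne'
    have := (((((hg.const_mul (2 * (m:ℝ) + 1)).sub (fn_deriv m y)).div (hasDerivAt_id y) hy0).const_mul
      (2 * (m:ℝ) + 2))).sub ((hasDerivAt_id y).mul hg)
    refine this.congr_deriv ?_
    simp
    field_simp
    ring
  rw [w, Matrix.det_fin_three]
  simp only [Matrix.of_apply, Matrix.cons_val', Matrix.cons_val_zero, Matrix.cons_val_one,
    Matrix.cons_val, d1 x hx, d2 x hx, d3 x hx, d4 x hx, PP]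
  field_simp
  ring

noncomputable def cc (n k : ℕ) : ℝ :=
  Real.sqrt (Real.pi / 2) * ((-1 : ℝ) ^ k / ((Nat.factorial k : ℝ) * Real.Gamma ((k : ℝ) + (n + 1 / 2) + 1)))
    * (1 / 2 : ℝ) ^ (2 * (k : ℝ) + ((n : ℝ) + 1 / 2))

lemma cc_succ (n k : ℕ) : cc (n + 1) k = cc n k / (2 * k + 2 * n + 3) := by
  have hp : (0:ℝ) < (k : ℝ) + (n + 1 / 2) + 1 := by positivity
  have e1 : (k : ℝ) + (((n + 1 : ℕ) : ℝ) + 1 / 2) + 1 = ((k : ℝ) + (n + 1 / 2) + 1) + 1 := by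
    push_cast; ring
  have e2 : 2 * (k : ℝ) + (((n + 1 : ℕ) : ℝ) + 1 / 2) = (2 * (k : ℝ) + ((n : ℝ) + 1 / 2)) + 1 := by
    push_cast; ring
  have e3 : (2 * (k:ℝ) + 2 * n + 3) = 2 * ((k : ℝ) + (n + 1 / 2) + 1) := by ring
  rw [cc, cc, e1, e2, Real.Gamma_add_one hp.ne', Real.rpow_add_one (by norm_num), e3]
  have := (Real.Gamma_pos_of_pos hp).ne'
  have h3 : (Nat.factorial k : ℝ) ≠ 0 := by positivity
  generalize (k : ℝ) + (n + 1 / 2) + 1 = q at *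
  field_simp

lemma cc_zero (k : ℕ) : cc 0 k = (-1) ^ k / (Nat.factorial (2 * k + 1) : ℝ) := by
  induction k with
  | zero =>
    have h2 : Real.Gamma (1 / 2 + 1) = 1 / 2 * √Real.pi := by
      rw [Real.Gamma_add_one (by norm_num), Real.Gamma_one_half_eq]
    have hs : 0 < √Real.pi := Real.sqrt_pos.2 Real.pi_pos
    have hs2 : 0 < √(2:ℝ) := Real.sqrt_pos.2 (by norm_num)
    simp only [cc, Nat.cast_zero, mul_zero, zero_add, pow_zero, Nat.factorial, h2]
    rw [← Real.sqrt_eq_rpow, Real.sqrt_div Real.pi_pos.le, Real.sqrt_div (by norm_num)]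
    simp
    field_simp
    rw [Real.sq_sqrt (by norm_num)]
  | succ k ih =>
    have hp : (0:ℝ) < (k : ℝ) + ((0:ℕ) + 1 / 2) + 1 := by positivity
    have e1 : ((k + 1 : ℕ) : ℝ) + (((0 : ℕ) : ℝ) + 1 / 2) + 1 = ((k : ℝ) + ((0:ℕ) + 1 / 2) + 1) + 1 := by
      push_cast; ring
    have e2 : 2 * ((k + 1 : ℕ) : ℝ) + (((0 : ℕ) : ℝ) + 1 / 2) = ((2 * (k : ℝ) + (((0:ℕ) : ℝ) + 1 / 2)) + 1) + 1 := by
      push_cast; ring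
    have e4 : 2 * (k + 1) + 1 = (2 * k + 1) + 1 + 1 := by ring
    have h : cc 0 (k + 1) = cc 0 k * (-1 / ((2 * k + 2) * (2 * k + 3))) := by
      rw [cc, cc, e1, e2, Real.Gamma_add_one hp.ne', Real.rpow_add_one (by norm_num),
        Real.rpow_add_one (by norm_num), Nat.factorial_succ]
      have := (Real.Gamma_pos_of_pos hp).ne'
      have h3 : (Nat.factorial k : ℝ) ≠ 0 := by positivity
      have e3 : (2 * (k:ℝ) + 3) = 2 * ((k : ℝ) + ((0:ℕ) + 1 / 2) + 1) := by push_cast; ring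
      have e5 : (2 * (k:ℝ) + 2) = 2 * ((k : ℝ) + 1) := by ring
      rw [e3, e5]
      have h6 : (k:ℝ) + 1 ≠ 0 := by positivity
      push_cast at *
      generalize (k : ℝ) + (0 + 1 / 2) + 1 = q at *
      field_simp
      ring
    have h7 : (Nat.factorial (2 * k + 1) : ℝ) ≠ 0 := by positivity
    rw [h, ih, e4, Nat.factorial_succ (2 * k + 1 + 1), Nat.factorial_succ (2 * k + 1)]
    push_cast
    generalize (Nat.factorial (2 * k + 1) : ℝ) = q at *
    field_simp
    ring

lemma cc_abs (n k : ℕ) : |cc n k| ≤ 1 / (Nat.factorial (2 * k + 1) : ℝ) := by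
  induction n with
  | zero => rw [cc_zero, abs_div]; simp
  | succ n ih =>
    rw [cc_succ, abs_div]
    have : (1:ℝ) ≤ |2 * (k:ℝ) + 2 * n + 3| := by
      rw [abs_of_nonneg (by positivity)]
      have : (0:ℝ) ≤ 2 * (k:ℝ) + 2 * n := by positivity
      linarith
    exact (div_le_self (abs_nonneg _) this).trans ih

lemma fn_series (n : ℕ) : ∀ x : ℝ, 0 ≤ x → HasSum (fun k => cc n k * x ^ (2 * k + 2 * n + 1)) (fn n x) := by
  induction n with
  | zero =>
    intro x _
    have := Real.hasSum_sin x
    simp only [fn]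
    convert this using 1
    funext k
    symm
    rw [cc_zero]
    ring
  | succ n ih =>
    intro x hx
    have hsum : Summable fun k : ℕ => x ^ (2 * k + 1) / (Nat.factorial (2 * k + 1) : ℝ) :=
      (Real.summable_pow_div_factorial x).comp_injective (i := fun k : ℕ => 2 * k + 1)
        (fun a b h => by simpa using h)
    have := intervalIntegral.hasSum_integral_of_dominated_convergence (a := 0) (b := x)
      (μ := MeasureTheory.volume)
      (F := fun (k : ℕ) t => t * (cc n k * t ^ (2 * k + 2 * n + 1))) (f := fun t => t * fn n t)
      (fun k _ => x ^ (2 * n + 1) * (x ^ (2 * k + 1) / (Nat.factorial (2 * k + 1) : ℝ)))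
      (fun k => (by fun_prop : Continuous fun t : ℝ => t * (cc n k * t ^ (2 * k + 2 * n + 1))).aestronglyMeasurable)
      (fun k => Eventually.of_forall fun t ht => by
        rw [uIoc_of_le hx] at ht
        have h1 := cc_abs n k
        have h2 : t ^ (2 * k + 2 * n + 2) ≤ x ^ (2 * k + 2 * n + 2) := pow_le_pow_left₀ ht.1.le ht.2 _
        have h3 := mul_le_mul h1 h2 (pow_nonneg ht.1.le _) (by positivity)
        calc ‖t * (cc n k * t ^ (2 * k + 2 * n + 1))‖ = |cc n k| * t ^ (2 * k + 2 * n + 2) := by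
              rw [norm_mul, norm_mul, Real.norm_eq_abs, Real.norm_eq_abs, Real.norm_eq_abs,
                abs_of_pos ht.1, abs_of_pos (pow_pos ht.1 _)]
              ring
          _ ≤ _ := h3
          _ = _ := by ring)
      (Eventually.of_forall fun t _ => hsum.mul_left _)
      (by simp)
      (Eventually.of_forall fun t ht => by
        rw [uIoc_of_le hx] at ht
        exact (ih t ht.1.le).mul_left t)
    suffices key : (fun k => cc (n + 1) k * x ^ (2 * k + 2 * (n + 1) + 1)) =
        fun k => ∫ t in (0:ℝ)..x, t * (cc n k * t ^ (2 * k + 2 * n + 1)) by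
      rw [key]
      exact this
    funext k
    symm
    rw [show (fun t : ℝ => t * (cc n k * t ^ (2 * k + 2 * n + 1))) =
      fun t => cc n k * t ^ (2 * k + 2 * n + 2) by funext t; ring]
    rw [intervalIntegral.integral_const_mul, integral_pow, cc_succ]
    push_cast
    simp
    have : (2 * (k:ℝ) + 2 * n + 2 + 1) = 2 * k + 2 * n + 3 := by ring
    rw [this]
    ring

lemma fn_bessel (n : ℕ) (x : ℝ) (hx : 0 < x) : fn n x =
    Real.sqrt (Real.pi / 2) * x ^ ((n : ℝ) + 1 / 2) * besselJ ((n : ℝ) + 1 / 2) x := by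
  rw [besselJ, ← tsum_mul_left, ← (fn_series n x hx.le).tsum_eq]
  congr 1
  funext k
  rw [cc, div_eq_mul_one_div x 2, Real.mul_rpow hx.le (by norm_num)]
  have : x ^ (2 * k + 2 * n + 1) = x ^ ((n : ℝ) + 1 / 2) * x ^ (2 * (k:ℝ) + ((n : ℝ) + 1 / 2)) := by
    rw [← Real.rpow_add hx, ← Real.rpow_natCast]
    congr 1
    push_cast
    ring
  rw [this]
  ring

theorem stmt_19 (n : ℕ) (hn : 1 ≤ n) :
    MonotoneOn (fun x => (x ^ (3 * (n - 1)))⁻¹ * w (fn n) x)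
      (Set.Ioo (0 : ℝ) (j1 (deriv (fn n)))) ∧
    (∀ x ∈ Set.Ioo (0 : ℝ) (j1 (deriv (fn n))), 0 < (x ^ (3 * (n - 1)))⁻¹ * w (fn n) x) ∧
    MonotoneOn (w (fn n)) (Set.Ioo (0 : ℝ) (j1 (deriv (fn n)))) ∧
    (∀ x ∈ Set.Ioo (0 : ℝ) (j1 (deriv (fn n))), 0 < w (fn n) x) ∧
    (∀ x ∈ Set.Ioo (0 : ℝ) (j1 (fn n)), 0 < w (fn n) x) ∧
    j1 (fn n) = j1 (besselJ ((n : ℝ) + 1 / 2)) := by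
  obtain ⟨m, rfl⟩ : ∃ m, n = m + 1 := ⟨n - 1, by omega⟩
  rw [Nat.add_sub_cancel]
  have hg : ∀ y ∈ Ioo 0 (j1 (deriv (fn (m + 1)))), 0 < fn m y := by
    apply fn_pos_of
    intro y hy h0
    apply not_zero_of_lt_j1 _ y hy.1 hy.2
    rw [(fn_deriv m y).deriv, h0, mul_zero]
  have hf : ∀ y ∈ Ioo 0 (j1 (fn (m + 1))), 0 < fn (m + 1) y :=
    fn_pos_of _ _ fun y hy => not_zero_of_lt_j1 _ y hy.1 hy.2
  have hw : ∀ x, 0 < x → (x ^ (3 * m))⁻¹ * w (fn (m + 1)) x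
      = 4 * (m + 1) * (PP m x / x ^ (3 * m + 2)) := by
    intro x hx
    rw [w_eq m x hx, pow_add]
    field_simp
  have hwpos : ∀ x, 0 < x → 0 < PP m x → 0 < w (fn (m + 1)) x := by
    intro x hx h
    rw [w_eq m x hx]
    positivity
  have hpos : ∀ x ∈ Ioo 0 (j1 (deriv (fn (m + 1)))), 0 < w (fn (m + 1)) x := by
    intro x hx
    exact hwpos x hx.1 ((PP_main m x fun y hy => hg y ⟨hy.1, hy.2.trans_lt hx.2⟩).2 x ⟨hx.1, le_rfl⟩)
  have hmono : MonotoneOn (fun x => (x ^ (3 * m))⁻¹ * w (fn (m + 1)) x)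
      (Ioo (0 : ℝ) (j1 (deriv (fn (m + 1))))) := by
    intro x hx y hy hxy
    have h := (PP_main m y fun z hz => hg z ⟨hz.1, hz.2.trans_lt hy.2⟩).1.monotoneOn
      ⟨hx.1, hxy⟩ ⟨hy.1, le_rfl⟩ hxy
    simp only [hw x hx.1, hw y hy.1]
    exact mul_le_mul_of_nonneg_left h (by positivity)
  have hpos' : ∀ x ∈ Ioo (0 : ℝ) (j1 (deriv (fn (m + 1)))), 0 < (x ^ (3 * m))⁻¹ * w (fn (m + 1)) x :=
    fun x hx => mul_pos (inv_pos.2 (pow_pos hx.1 _)) (hpos x hx)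
  refine ⟨hmono, hpos', ?_, hpos, ?_, ?_⟩
  · intro x hx y hy hxy
    have h := hmono hx hy hxy
    have hp : x ^ (3 * m) ≤ y ^ (3 * m) := pow_le_pow_left₀ hx.1.le hxy _
    have := mul_le_mul hp h (hpos' x hx).le (pow_pos hy.1 _).le
    simp only at this
    rwa [mul_inv_cancel_left₀ (pow_pos hx.1 _).ne', mul_inv_cancel_left₀ (pow_pos hy.1 _).ne'] at this
  · intro x hx
    exact hwpos x hx.1 (PP_pos_full m x hx.1 fun y hy => hf y ⟨hy.1, hy.2.trans_lt hx.2⟩)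
  · unfold j1
    congr 1
    ext x
    simp only [mem_ofPred_eq]
    refine and_congr_right fun hx => ?_
    rw [fn_bessel (m + 1) x hx]
    have h1 : 0 < Real.sqrt (Real.pi / 2) := Real.sqrt_pos.2 (by positivity)
    have h2 := Real.rpow_pos_of_pos hx (((m + 1 : ℕ) : ℝ) + 1 / 2)
    rw [mul_eq_zero, or_iff_right (mul_pos h1 h2).ne']
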